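/- Let Ω ⊂ ℝ² be a convex quadrangle, i.e. the convex hull of four points in convex position (no point lies in the convex hull of the other three). If Ω satisfies the balance law at the origin, then Ω is a parallelogram centered at the origin, i.e. Ω = −Ω. -/

import Mathlib

open MeasureTheory Metric Set
open scoped Pointwise

noncomputable section

/-- `Ω` satisfies the balance law at the origin: for almost every `r ≥ 0`, the
vector-valued integral of `χ_Ω(r v) • v` over the unit sphere (with respect to the
surface, i.e. `(m-1)`-dimensional Hausdorff, measure) vanishes. -/
def SatisfiesBalanceLaw {m : ℕ} (Ω : Set (EuclideanSpace ℝ (Fin m))) : Prop :=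
  ∀ᵐ r ∂(volume.restrict (Ici (0 : ℝ))),
    (∫ v in sphere (0 : EuclideanSpace ℝ (Fin m)) 1,
      (Ω.indicator (fun _ => (1 : ℝ)) (r • v)) • v ∂(μH[(m : ℝ) - 1])) = 0

/-!
Comparison principle: if `Ω` and `Ω'` both satisfy the balance law and a linear functional `ℓ` is
nonnegative on `Ω \ Ω'` and nonpositive on `Ω' \ Ω`, then integrating `ℓ` over spheres shows that
`ℓ` vanishes on the interior of `Ω \ Ω'`. Taking `Ω' = ∅` shows that `0` is interior to the
quadrangle, which is therefore `{x | ∀ i, ⟪n i, x⟫ ≤ 1}` for four normals `n i`.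

Circles about `0` slightly larger than the largest inscribed one leave the quadrangle in disjoint
congruent caps around the longest normals, so the longest normals sum to zero. There cannot be only
one. If there are three, they bound a regular triangle centred at `0`, which is balanced, and
comparing it with the quadrangle (`ℓ` being the fourth normal) gives a contradiction. If all four
normals `a, b, c, d` have the same length, then `a + b`, `a + c`, `a + d` are pairwise orthogonal,
so in the plane one of them vanishes. Hence two normals are always opposite. With `k`, `l` the
other two, `n k + n l` is negative on `Ω \ -Ω`, and comparing `Ω` with the balanced set `-Ω` gives
`Ω = -Ω`.
-/

open Filter Topology InnerProductSpace

lemma subset_of_interior_sdiff_eq_empty {E : Type*} [AddCommGroup E] [Module ℝ E]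
    [TopologicalSpace E] [IsTopologicalAddGroup E] [ContinuousSMul ℝ E] {s t : Set E}
    (hs : Convex ℝ s) (hne : (interior s).Nonempty) (ht : IsClosed t)
    (hst : interior (s \ t) = ∅) : s ⊆ t := by
  have hint : interior s ⊆ t := by
    intro x hx
    by_contra hxt
    have hsub : interior s \ t ⊆ interior (s \ t) :=
      interior_maximal (sdiff_subset_sdiff_left interior_subset) (isOpen_interior.sdiff ht)
    simpa only [hst, mem_empty_iff_false] using hsub ⟨hx, hxt⟩
  calc s ⊆ closure s := subset_closure
    _ = closure (interior s) := (hs.closure_interior_eq_closure_of_nonempty_interior hne).symm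
    _ ⊆ t := closure_minimal hint ht

lemma exists_gt_of_ae_restrict_Ici {p q : ℝ → Prop} {a : ℝ} (ha : 0 ≤ a)
    (hp : ∀ᵐ r ∂volume.restrict (Ici (0 : ℝ)), p r) (hq : ∀ᶠ r in 𝓝[>] a, q r) :
    ∃ r > a, p r ∧ q r := by
  obtain ⟨b, hab : a < b, hb⟩ := mem_nhdsGT_iff_exists_Ioo_subset.1 hq
  have hp' : ∀ᵐ r ∂volume.restrict (Ioo a b), p r :=
    ae_restrict_of_ae_restrict_of_subset (fun r hr => ha.trans hr.1.le) hp
  have : (ae (volume.restrict (Ioo a b))).NeBot := by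
    rw [ae_neBot, Ne, Measure.restrict_eq_zero, Real.volume_Ioo]
    simpa using hab
  obtain ⟨r, hr, hpr⟩ := ((ae_restrict_mem measurableSet_Ioo).and hp').exists
  exact ⟨r, hr.1, hpr, hb hr⟩

section Balanced

variable {E : Type*} [NormedAddCommGroup E] [InnerProductSpace ℝ E] [MeasurableSpace E]
  {σ : Measure E} {Ω Ω' A A' : Set E}

/-- A uniform measure on the unit sphere of `E`, regarded as a measure on `E`: finite, concentrated
on the sphere, invariant under linear isometries, and charging every open set that meets the
sphere. -/
structure IsUniformOnSphere (σ : Measure E) : Prop where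
  isFiniteMeasure : IsFiniteMeasure σ
  ae_norm_eq_one : ∀ᵐ v ∂σ, ‖v‖ = 1
  measurePreserving (g : E ≃ₗᵢ[ℝ] E) : MeasurePreserving g σ σ
  measure_ne_zero {U : Set E} : IsOpen U → ∀ v ∈ U, ‖v‖ = 1 → σ U ≠ 0

/-- The balance law at the origin with respect to a measure `σ` on the unit sphere of `E`. -/
def IsBalanced (σ : Measure E) (Ω : Set E) : Prop :=
  ∀ᵐ r ∂volume.restrict (Ici (0 : ℝ)), ∫ v in (r • ·) ⁻¹' Ω, v ∂σ = 0

lemma IsUniformOnSphere.measure_cap_eq_zero (hσ : IsUniformOnSphere σ) {a : E} {t : ℝ}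
    (hat : ‖a‖ ≤ t) : σ {v | t < ⟪a, v⟫_ℝ} = 0 := by
  refine measure_mono_null (fun v (hv : t < ⟪a, v⟫_ℝ) => ?_) (ae_iff.1 hσ.ae_norm_eq_one)
  intro (hv1 : ‖v‖ = 1)
  have hle := real_inner_le_norm a v
  rw [hv1, mul_one] at hle
  exact (hv.trans_le (hle.trans hat)).false

variable [BorelSpace E]

namespace IsUniformOnSphere

lemma map_setIntegral_preimage (hσ : IsUniformOnSphere σ) (g : E ≃ₗᵢ[ℝ] E) (A : Set E) :
    g (∫ v in g ⁻¹' A, v ∂σ) = ∫ v in A, v ∂σ := by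
  rw [← (hσ.measurePreserving g).setIntegral_preimage_emb
    g.toHomeomorph.measurableEmbedding (fun v => v) A]
  exact (g.toContinuousLinearEquiv.integral_comp_comm _).symm

lemma map_setIntegral_smul_preimage (hσ : IsUniformOnSphere σ) {g : E ≃ₗᵢ[ℝ] E}
    (hΩ : g ⁻¹' Ω = Ω) (r : ℝ) :
    g (∫ v in (r • ·) ⁻¹' Ω, v ∂σ) = ∫ v in (r • ·) ⁻¹' Ω, v ∂σ := by
  have hpre : g ⁻¹' ((r • ·) ⁻¹' Ω) = (r • ·) ⁻¹' Ω := by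
    nth_rw 2 [← hΩ]
    ext v
    simp
  nth_rw 1 [← hpre]
  exact hσ.map_setIntegral_preimage g _

lemma integral_id_eq_zero (hσ : IsUniformOnSphere σ) : ∫ v, v ∂σ = 0 := by
  have h : -∫ v, v ∂σ = ∫ v, v ∂σ := by
    simpa only [preimage_univ, setIntegral_univ, LinearIsometryEquiv.coe_neg] using
      hσ.map_setIntegral_preimage (LinearIsometryEquiv.neg ℝ) univ
  have := IsAddTorsionFree.of_isTorsionFree ℝ E
  exact self_eq_neg.1 h.symm

lemma setIntegral_mem_span (hσ : IsUniformOnSphere σ) {a : E}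
    (hA : (ℝ ∙ a).reflection ⁻¹' A = A) : ∃ κ : ℝ, ∫ v in A, v ∂σ = κ • a := by
  have hfix := hσ.map_setIntegral_preimage (ℝ ∙ a).reflection A
  rw [hA, Submodule.reflection_eq_self_iff, Submodule.mem_span_singleton] at hfix
  exact hfix.imp fun _ => Eq.symm

lemma setIntegral_cap_congr (hσ : IsUniformOnSphere σ) {a b : E} {t κ : ℝ}
    (hab : ‖a‖ = ‖b‖) (ha : ∫ v in {v | t < ⟪a, v⟫_ℝ}, v ∂σ = κ • a) :
    ∫ v in {v | t < ⟪b, v⟫_ℝ}, v ∂σ = κ • b := by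
  set g := (ℝ ∙ (a - b))ᗮ.reflection
  have hg : g a = b := Submodule.reflection_sub hab
  have hpre : g ⁻¹' {v | t < ⟪b, v⟫_ℝ} = {v | t < ⟪a, v⟫_ℝ} := by
    ext v
    rw [mem_preimage, mem_ofPred_eq, mem_ofPred_eq, ← hg, LinearIsometryEquiv.inner_map_map]
  rw [← hσ.map_setIntegral_preimage g, hpre, ha, map_smul, hg]

end IsUniformOnSphere

lemma IsBalanced.neg (hσ : IsUniformOnSphere σ) (hΩ : IsBalanced σ Ω) : IsBalanced σ (-Ω) := by
  filter_upwards [hΩ] with r hr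
  have hpre : LinearIsometryEquiv.neg ℝ ⁻¹' ((r • ·) ⁻¹' (-Ω)) = (r • ·) ⁻¹' Ω := by
    ext v
    simp
  rw [← hσ.map_setIntegral_preimage (LinearIsometryEquiv.neg ℝ), hpre, hr, map_zero]

variable [FiniteDimensional ℝ E]

lemma IsUniformOnSphere.integrable_id (hσ : IsUniformOnSphere σ) : Integrable (fun v => v) σ :=
  have := hσ.isFiniteMeasure
  .of_bound aestronglyMeasurable_id 1 (hσ.ae_norm_eq_one.mono fun _ hv => hv.le)

lemma IsUniformOnSphere.exists_setIntegral_cap (hσ : IsUniformOnSphere σ) {a : E} {t : ℝ}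
    (ht : 0 ≤ t) (hta : t < ‖a‖) :
    ∃ κ : ℝ, 0 < κ ∧ ∫ v in {v | t < ⟪a, v⟫_ℝ}, v ∂σ = κ • a := by
  have ha : 0 < ‖a‖ := ht.trans_lt hta
  have hrefl : (ℝ ∙ a).reflection a = a :=
    Submodule.reflection_mem_subspace_eq_self (Submodule.mem_span_singleton_self a)
  set cap : Set E := {v | t < ⟪a, v⟫_ℝ}
  obtain ⟨κ, hκ⟩ := hσ.setIntegral_mem_span (a := a) (A := cap) <| by
    ext v
    rw [mem_preimage, mem_ofPred_eq, mem_ofPred_eq]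
    nth_rw 1 [← hrefl, LinearIsometryEquiv.inner_map_map]
  have hcap : IsOpen cap := isOpen_lt (by fun_prop) (by fun_prop)
  have hσcap : σ cap ≠ 0 := by
    refine hσ.measure_ne_zero hcap (‖a‖⁻¹ • a) ?_ (norm_smul_inv_norm (norm_pos_iff.1 ha))
    rwa [mem_ofPred_eq, real_inner_smul_right, real_inner_self_eq_norm_sq, pow_two,
      inv_mul_cancel_left₀ ha.ne']
  have hsupp : Function.support (fun v => ⟪a, v⟫_ℝ) ∩ cap = cap :=
    inter_eq_right.2 fun v hv => (ht.trans_lt hv).ne'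
  have hpos : 0 < ∫ v in cap, ⟪a, v⟫_ℝ ∂σ := by
    rwa [setIntegral_pos_iff_support_of_nonneg_ae
      ((ae_restrict_mem hcap.measurableSet).mono fun v hv => ht.trans (le_of_lt hv))
      (hσ.integrable_id.const_inner a).integrableOn, hsupp, pos_iff_ne_zero]
  rw [integral_inner hσ.integrable_id.integrableOn, hκ, real_inner_smul_right] at hpos
  exact ⟨κ, pos_of_mul_pos_left hpos real_inner_self_nonneg, hκ⟩

lemma IsUniformOnSphere.ae_inner_eq_zero_of_setIntegral_eq (hσ : IsUniformOnSphere σ)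
    (hA : MeasurableSet A) (hA' : MeasurableSet A') (heq : ∫ v in A, v ∂σ = ∫ v in A', v ∂σ) {ℓ : E}
    (hpos : ∀ v ∈ A \ A', 0 ≤ ⟪ℓ, v⟫_ℝ) (hneg : ∀ v ∈ A' \ A, ⟪ℓ, v⟫_ℝ ≤ 0) :
    ∀ᵐ v ∂σ, v ∈ A \ A' → ⟪ℓ, v⟫_ℝ = 0 := by
  set f : E → ℝ := fun v => ⟪ℓ, v⟫_ℝ
  have hf : Integrable f σ := hσ.integrable_id.const_inner ℓ
  have hfint (B : Set E) : ∫ v in B, f v ∂σ = ⟪ℓ, ∫ v in B, v ∂σ⟫_ℝ :=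
    integral_inner hσ.integrable_id.integrableOn ℓ
  have hF_nonneg : 0 ≤ A.indicator f - A'.indicator f := by
    intro v
    by_cases hv : v ∈ A <;> by_cases hv' : v ∈ A' <;> simp_all [f]
  have hF_zero : ∫ v, (A.indicator f - A'.indicator f) v ∂σ = 0 := by
    rw [integral_sub' (hf.indicator hA) (hf.indicator hA'), integral_indicator hA,
      integral_indicator hA', hfint, hfint, heq, sub_self]
  have hF_ae := (integral_eq_zero_iff_of_nonneg hF_nonneg
    ((hf.indicator hA).sub (hf.indicator hA'))).1 hF_zero
  filter_upwards [hF_ae] with v hv hvA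
  simpa [hvA.1, hvA.2] using hv

lemma IsBalanced.inner_eq_zero_of_mem_interior_sdiff (hσ : IsUniformOnSphere σ)
    (hΩm : MeasurableSet Ω) (hΩm' : MeasurableSet Ω') (hΩ : IsBalanced σ Ω)
    (hΩ' : IsBalanced σ Ω') {ℓ : E} (hpos : ∀ x ∈ Ω \ Ω', 0 ≤ ⟪ℓ, x⟫_ℝ)
    (hneg : ∀ x ∈ Ω' \ Ω, ⟪ℓ, x⟫_ℝ ≤ 0) {x : E} (hx : x ∈ interior (Ω \ Ω')) :
    ⟪ℓ, x⟫_ℝ = 0 := by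
  by_contra hℓx
  have hx0 : x ≠ 0 := by rintro rfl; simp at hℓx
  set U := interior (Ω \ Ω') ∩ {y | ⟪ℓ, y⟫_ℝ ≠ 0}
  have hU : IsOpen U := isOpen_interior.inter (isOpen_ne_fun (by fun_prop) (by fun_prop))
  have hray : ∀ᶠ r in 𝓝[>] ‖x‖, r • (‖x‖⁻¹ • x) ∈ U := by
    refine nhdsWithin_le_nhds (ContinuousAt.eventually_mem (by fun_prop) (hU.mem_nhds ?_))
    rw [smul_inv_smul₀ (norm_ne_zero_iff.2 hx0)]
    exact ⟨hx, hℓx⟩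
  obtain ⟨r, hr, ⟨hΩr, hΩr'⟩, hrU⟩ :=
    exists_gt_of_ae_restrict_Ici (norm_nonneg x) (hΩ.and hΩ') hray
  have hr0 : 0 < r := (norm_nonneg x).trans_lt hr
  have hinner (v : E) : ⟪ℓ, r • v⟫_ℝ = r * ⟪ℓ, v⟫_ℝ := real_inner_smul_right _ _ _
  have hae : ∀ᵐ v ∂σ, v ∈ (r • ·) ⁻¹' Ω \ (r • ·) ⁻¹' Ω' → ⟪ℓ, v⟫_ℝ = 0 := by
    refine hσ.ae_inner_eq_zero_of_setIntegral_eq (measurable_const_smul r hΩm)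
      (measurable_const_smul r hΩm') (hΩr.trans hΩr'.symm) (fun v hv => ?_) fun v hv => ?_
    · exact nonneg_of_mul_nonneg_right (hinner v ▸ hpos _ hv) hr0
    · exact nonpos_of_mul_nonpos_right (hinner v ▸ hneg _ hv) hr0
  refine hσ.measure_ne_zero (hU.preimage (continuous_const_smul r)) (‖x‖⁻¹ • x) hrU
    (norm_smul_inv_norm hx0) (measure_mono_null ?_ (ae_iff.1 hae))
  rintro v ⟨hv, hℓv : ⟪ℓ, r • v⟫_ℝ ≠ 0⟩ hv0
  exact hℓv (by rw [hinner, hv0 (interior_subset (s := Ω \ Ω') hv), mul_zero])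

lemma IsBalanced.pos_of_subset_halfSpace (hσ : IsUniformOnSphere σ) (hΩm : MeasurableSet Ω)
    (hΩ : IsBalanced σ Ω) {a x : E} {c : ℝ} (hsub : ∀ y ∈ Ω, ⟪a, y⟫_ℝ ≤ c)
    (hx : x ∈ interior Ω) (hlt : ⟪a, x⟫_ℝ < c) : 0 < c := by
  by_contra! hc
  have hempty : IsBalanced σ (∅ : Set E) := .of_forall fun r => by simp
  have hax := inner_eq_zero_of_mem_interior_sdiff hσ hΩm .empty hΩ hempty (ℓ := -a)
    (fun y hy => by simpa using (hsub y hy.1).trans hc) (by simp) (by simpa using hx)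
  rw [inner_neg_left] at hax
  linarith

end Balanced

section Polyhedron

variable {E ι : Type*} [NormedAddCommGroup E] [InnerProductSpace ℝ E] {n : ι → E} {c : ι → ℝ}

/-- The polyhedron with normals `n i` and offsets `c i`, the intersection of the half-spaces
`⟪n i, x⟫ ≤ c i`. -/
def polyhedron (n : ι → E) (c : ι → ℝ) : Set E := {x | ∀ i, ⟪n i, x⟫_ℝ ≤ c i}

/-- Every inequality of the polyhedron defines a facet: it is attained at a point where all the
others are strict. -/
def IsIrredundant (n : ι → E) (c : ι → ℝ) : Prop :=
  ∀ i, ∃ x, ⟪n i, x⟫_ℝ = c i ∧ ∀ j ≠ i, ⟪n j, x⟫_ℝ < c j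

lemma isClosed_polyhedron (n : ι → E) (c : ι → ℝ) : IsClosed (polyhedron n c) := by
  simp only [polyhedron, ofPred_forall]
  exact isClosed_iInter fun i => isClosed_le (by fun_prop) (by fun_prop)

lemma convex_polyhedron (n : ι → E) (c : ι → ℝ) : Convex ℝ (polyhedron n c) := by
  simp only [polyhedron, ofPred_forall]
  exact convex_iInter fun i => convex_halfSpace_le (innerₛₗ ℝ (n i)).isLinear (c i)

lemma mem_interior_polyhedron [Finite ι] {x : E} (hx : ∀ i, ⟪n i, x⟫_ℝ < c i) :
    x ∈ interior (polyhedron n c) := by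
  have hopen : IsOpen {y | ∀ i, ⟪n i, y⟫_ℝ < c i} := by
    simp only [ofPred_forall]
    exact isOpen_iInter_of_finite fun i => isOpen_lt (by fun_prop) (by fun_prop)
  exact interior_maximal (fun y hy i => (hy i).le) hopen hx

lemma zero_mem_interior_polyhedron_one [Finite ι] (n : ι → E) :
    (0 : E) ∈ interior (polyhedron n 1) :=
  mem_interior_polyhedron fun i => by simp

lemma neg_polyhedron (n : ι → E) (c : ι → ℝ) : -polyhedron n c = polyhedron (-n) c := by
  ext x
  simp [polyhedron]

lemma preimage_smul_polyhedron_one (n : ι → E) {r : ℝ} (hr : 0 < r) :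
    (r • ·) ⁻¹' polyhedron n 1 = polyhedron n fun _ => r⁻¹ := by
  ext x
  simp [polyhedron, real_inner_smul_right, ← le_inv_mul_iff₀ hr]

lemma polyhedron_inv_smul (n : ι → E) (hc : ∀ i, 0 < c i) :
    polyhedron (fun i => (c i)⁻¹ • n i) 1 = polyhedron n c := by
  ext x
  simp [polyhedron, real_inner_smul_left, inv_mul_le_iff₀ (hc _)]

lemma IsIrredundant.inv_smul (h : IsIrredundant n c) (hc : ∀ i, 0 < c i) :
    IsIrredundant (fun i => (c i)⁻¹ • n i) 1 := by
  intro i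
  obtain ⟨x, hx, hxj⟩ := h i
  refine ⟨x, ?_, fun j hj => ?_⟩
  · simp [real_inner_smul_left, hx, (hc i).ne']
  · simpa [real_inner_smul_left, inv_mul_lt_iff₀ (hc j)] using hxj j hj

lemma IsIrredundant.injective (h : IsIrredundant n 1) : Function.Injective n := by
  intro i j hij
  by_contra hne
  obtain ⟨x, hx, hxj⟩ := h i
  exact (hxj j (Ne.symm hne)).ne (hij ▸ hx)

lemma IsIrredundant.ne_zero (h : IsIrredundant n 1) (i : ι) : n i ≠ 0 := by
  obtain ⟨x, hx, -⟩ := h i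
  rintro hi
  simp [hi] at hx

lemma IsIrredundant.exists_forall_lt [Nontrivial ι] (h : IsIrredundant n c) :
    ∃ x, ∀ i, ⟪n i, x⟫_ℝ < c i := by
  obtain ⟨i, j, hij⟩ := exists_pair_ne ι
  obtain ⟨x, hx, hx'⟩ := h i
  obtain ⟨y, hy, hy'⟩ := h j
  refine ⟨(2⁻¹ : ℝ) • (x + y), fun k => ?_⟩
  rw [real_inner_smul_right, inner_add_right]
  rcases eq_or_ne k i with rfl | hk
  · linarith [hy' k hij]
  · rcases eq_or_ne k j with rfl | hk'
    · linarith [hx' k hk]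
    · linarith [hx' k hk, hy' k hk']

lemma preimage_polyhedron_of_perm (g : E ≃ₗᵢ[ℝ] E) (e : Equiv.Perm ι) (hg : ∀ i, g (n i) = n (e i))
    (hc : ∀ i, c (e i) = c i) : g ⁻¹' polyhedron n c = polyhedron n c := by
  ext x
  calc (∀ i, ⟪n i, g x⟫_ℝ ≤ c i) ↔ ∀ i, ⟪n (e i), g x⟫_ℝ ≤ c (e i) := e.forall_congr_right.symm
    _ ↔ ∀ i, ⟪n i, x⟫_ℝ ≤ c i := by simp only [← hg, hc, LinearIsometryEquiv.inner_map_map]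

end Polyhedron

section BalancedPolyhedron

variable {E ι : Type*} [NormedAddCommGroup E] [InnerProductSpace ℝ E] [FiniteDimensional ℝ E]
  [MeasurableSpace E] [BorelSpace E] {σ : Measure E} {n : ι → E}

lemma IsUniformOnSphere.setIntegral_polyhedron_compl [Fintype ι] (hσ : IsUniformOnSphere σ) {t : ℝ}
    (ht : Pairwise fun i j => ‖n i + n j‖ ≤ 2 * t) :
    ∫ v in (polyhedron n fun _ => t)ᶜ, v ∂σ = ∑ i, ∫ v in {v | t < ⟪n i, v⟫_ℝ}, v ∂σ := by
  have hunion : (polyhedron n fun _ => t)ᶜ = ⋃ i, {v | t < ⟪n i, v⟫_ℝ} := by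
    ext v
    simp [polyhedron]
  have hdisj : Pairwise (Function.onFun (AEDisjoint σ) fun i => {v | t < ⟪n i, v⟫_ℝ}) := by
    intro i j hij
    refine measure_mono_null (fun v hv => ?_) (hσ.measure_cap_eq_zero (ht hij))
    have hi : t < ⟪n i, v⟫_ℝ := hv.1
    have hj : t < ⟪n j, v⟫_ℝ := hv.2
    rw [mem_ofPred_eq, inner_add_left]
    linarith
  have hmeas (i : ι) : NullMeasurableSet {v | t < ⟪n i, v⟫_ℝ} σ :=
    (isOpen_lt (by fun_prop) (by fun_prop)).measurableSet.nullMeasurableSet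
  rw [hunion, integral_iUnion_ae hmeas hdisj hσ.integrable_id.integrableOn, tsum_fintype]

lemma IsUniformOnSphere.sum_normals_eq_zero [Fintype ι] (hσ : IsUniformOnSphere σ) {t ρ : ℝ}
    (ht0 : 0 ≤ t) (htρ : t < ρ) (ht : ∀ i, ‖n i‖ ≠ ρ → ‖n i‖ ≤ t)
    (hadd : Pairwise fun i j => ‖n i + n j‖ ≤ 2 * t)
    (hint : ∫ v in polyhedron n fun _ => t, v ∂σ = 0) : ∑ i with ‖n i‖ = ρ, n i = 0 := by
  rcases Finset.eq_empty_or_nonempty {i | ‖n i‖ = ρ} with hM | ⟨i₀, hi₀⟩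
  · rw [hM, Finset.sum_empty]
  have hi₀ρ : ‖n i₀‖ = ρ := (Finset.mem_filter.1 hi₀).2
  obtain ⟨κ, hκ, hcap⟩ := hσ.exists_setIntegral_cap (a := n i₀) ht0 (hi₀ρ ▸ htρ)
  have hcaps (i : ι) :
      ∫ v in {v | t < ⟪n i, v⟫_ℝ}, v ∂σ = κ • if ‖n i‖ = ρ then n i else 0 := by
    split_ifs with hi
    · exact hσ.setIntegral_cap_congr (hi₀ρ.trans hi.symm) hcap
    · rw [setIntegral_measure_zero _ (hσ.measure_cap_eq_zero (ht i hi)), smul_zero]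
  have hsum : κ • ∑ i with ‖n i‖ = ρ, n i = 0 := by
    rw [Finset.sum_filter, Finset.smul_sum, ← Finset.sum_congr rfl fun i _ => hcaps i,
      ← hσ.setIntegral_polyhedron_compl hadd]
    simpa [hint, hσ.integral_id_eq_zero] using
      integral_add_compl (isClosed_polyhedron n fun _ => t).measurableSet hσ.integrable_id
  exact (smul_eq_zero.1 hsum).resolve_left hκ.ne'

-- A sphere slightly larger than the largest one inscribed about `0` sticks out of the polyhedron
-- only in disjoint congruent caps around the longest normals.
lemma IsBalanced.sum_normals_eq_zero [Fintype ι] (hσ : IsUniformOnSphere σ)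
    (hbal : IsBalanced σ (polyhedron n 1)) (hn : Function.Injective n) {ρ : ℝ} (hρ : 0 < ρ)
    (hnρ : ∀ i, ‖n i‖ ≤ ρ) : ∑ i with ‖n i‖ = ρ, n i = 0 := by
  have hinv : Tendsto (fun r : ℝ => r⁻¹) (𝓝[>] ρ⁻¹) (𝓝 ρ) := by
    simpa only [inv_inv] using
      (tendsto_inv₀ (inv_ne_zero hρ.ne')).mono_left nhdsWithin_le_nhds
  have hnorm : ∀ᶠ r in 𝓝[>] ρ⁻¹, ∀ i, ‖n i‖ ≠ ρ → ‖n i‖ ≤ r⁻¹ := by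
    refine eventually_all.2 fun i => eventually_imp_distrib_left.2 fun hi => ?_
    exact hinv.eventually_const_le ((hnρ i).lt_of_ne hi)
  have hadd : ∀ᶠ r in 𝓝[>] ρ⁻¹, Pairwise fun i j => ‖n i + n j‖ ≤ 2 * r⁻¹ := by
    refine eventually_all.2 fun i => eventually_all.2 fun j =>
      eventually_imp_distrib_left.2 fun hij => ?_
    have hmid : ‖(2⁻¹ : ℝ) • n i + (2⁻¹ : ℝ) • n j‖ < ρ :=
      norm_combo_lt_of_ne (hnρ i) (hnρ j) (hn.ne hij) (by norm_num) (by norm_num) (by norm_num)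
    rw [← smul_add, norm_smul, Real.norm_of_nonneg (by norm_num), inv_mul_lt_iff₀ two_pos] at hmid
    exact (hinv.const_mul 2).eventually_const_le hmid
  obtain ⟨r, hr, hint, hnorm, hadd⟩ :=
    exists_gt_of_ae_restrict_Ici (inv_pos.2 hρ).le hbal (hnorm.and hadd)
  have hr0 : 0 < r := (inv_pos.2 hρ).trans hr
  rw [preimage_smul_polyhedron_one n hr0] at hint
  exact hσ.sum_normals_eq_zero (inv_pos.2 hr0).le (inv_lt_of_inv_lt₀ hρ hr) hnorm hadd hint

end BalancedPolyhedron

section Symmetry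

variable {E ι : Type*} [NormedAddCommGroup E] [InnerProductSpace ℝ E] {n : ι → E}

lemma inner_add_lt_zero_of_mem_polyhedron_sdiff_neg {k l : ι}
    (hkl : ∀ i, i ≠ k → i ≠ l → ∃ j, n j = -n i) {x : E}
    (hx : x ∈ polyhedron n 1 \ -polyhedron n 1) : ⟪n k + n l, x⟫_ℝ < 0 := by
  obtain ⟨hx, hx'⟩ := hx
  obtain ⟨i, hi⟩ : ∃ i, ⟪n i, x⟫_ℝ < -1 := by
    rw [neg_polyhedron] at hx'
    simpa [polyhedron, neg_le, lt_neg] using hx'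
  have hle (j : ι) : ⟪n j, x⟫_ℝ ≤ 1 := hx j
  rw [inner_add_left]
  by_cases hik : i = k
  · linarith [hle l, hik ▸ hi]
  · by_cases hil : i = l
    · linarith [hle k, hil ▸ hi]
    · obtain ⟨j, hj⟩ := hkl i hik hil
      have hlej := hle j
      rw [hj, inner_neg_left] at hlej
      linarith

lemma inner_add_add_eq_zero {a b c d : E} (hab : ‖a‖ = ‖b‖) (hac : ‖a‖ = ‖c‖) (had : ‖a‖ = ‖d‖)
    (hsum : a + b + c + d = 0) : ⟪a + b, a + c⟫_ℝ = 0 := by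
  have hd : ‖d‖ ^ 2 = ‖a + b + c‖ ^ 2 := by
    rw [← norm_neg d, neg_eq_of_add_eq_zero_left hsum]
  rw [norm_add_sq_real, norm_add_sq_real, inner_add_left, ← hab, ← hac, ← had] at hd
  rw [inner_add_left, inner_add_right, inner_add_right, real_inner_self_eq_norm_sq,
    real_inner_comm a b]
  linarith

lemma exists_eq_neg_of_sum_eq_zero [FiniteDimensional ℝ E] (hE : Module.finrank ℝ E ≤ 2)
    {a b c d : E} (hab : ‖a‖ = ‖b‖) (hac : ‖a‖ = ‖c‖) (had : ‖a‖ = ‖d‖)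
    (hsum : a + b + c + d = 0) : b = -a ∨ c = -a ∨ d = -a := by
  by_contra! hne
  have hv : ∀ i, ![a + b, a + c, a + d] i ≠ 0 := by
    simpa [Fin.forall_fin_succ, add_eq_zero_iff_neg_eq, eq_comm] using hne
  have hbc := inner_add_add_eq_zero hab hac had hsum
  have hbd := inner_add_add_eq_zero hab had hac (by rw [← hsum]; abel)
  have hcd := inner_add_add_eq_zero hac had hab (by rw [← hsum]; abel)
  have horth : Pairwise fun i j => ⟪![a + b, a + c, a + d] i, ![a + b, a + c, a + d] j⟫_ℝ = 0 := by
    intro i j hij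
    fin_cases i <;> fin_cases j <;>
      first | exact absurd rfl hij | assumption | (rw [real_inner_comm]; assumption)
  have hcard := (linearIndependent_of_ne_zero_of_inner_eq_zero hv horth).fintype_card_le_finrank
  rw [Fintype.card_fin] at hcard
  omega

lemma exists_eq_neg_of_norm_eq_of_card_eq_four [FiniteDimensional ℝ E] [Fintype ι]
    (hE : Module.finrank ℝ E ≤ 2) (hι : Fintype.card ι = 4) (hnorm : ∀ i j, ‖n i‖ = ‖n j‖)
    (hsum : ∑ i, n i = 0) : ∃ i j, i ≠ j ∧ n j = -n i := by
  let e : Fin 4 ≃ ι := (Fintype.equivFinOfCardEq hι).symm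
  rw [← e.sum_comp, Fin.sum_univ_four] at hsum
  have hne (i : Fin 4) (hi : 0 ≠ i) : e 0 ≠ e i := e.injective.ne hi
  rcases exists_eq_neg_of_sum_eq_zero hE (hnorm _ _) (hnorm _ _) (hnorm _ _) hsum with h | h | h
  exacts [⟨_, _, hne 1 (by decide), h⟩, ⟨_, _, hne 2 (by decide), h⟩, ⟨_, _, hne 3 (by decide), h⟩]

lemma reflection_sub_eq_apply_swap [DecidableEq ι] {i j : ι} (hnorm : ‖n i‖ = ‖n j‖)
    (hinner : ∀ k, k ≠ i → k ≠ j → ⟪n i - n j, n k⟫_ℝ = 0) (k : ι) :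
    (ℝ ∙ (n i - n j))ᗮ.reflection (n k) = n (Equiv.swap i j k) := by
  rcases eq_or_ne k i with rfl | hki
  · rw [Submodule.reflection_sub hnorm, Equiv.swap_apply_left]
  rcases eq_or_ne k j with rfl | hkj
  · have hrefl := congrArg (ℝ ∙ (n i - n k))ᗮ.reflection (Submodule.reflection_sub hnorm)
    rw [Submodule.reflection_reflection] at hrefl
    rw [Equiv.swap_apply_right, ← hrefl]
  · rw [Equiv.swap_apply_of_ne_of_ne hki hkj, Submodule.reflection_eq_self_iff,
      Submodule.mem_orthogonal_singleton_iff_inner_right]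
    exact hinner k hki hkj

end Symmetry

section BalancedSymmetry

variable {E ι : Type*} [NormedAddCommGroup E] [InnerProductSpace ℝ E] [FiniteDimensional ℝ E]
  [MeasurableSpace E] [BorelSpace E] {σ : Measure E} {n : ι → E}

lemma IsBalanced.polyhedron_eq_neg [Finite ι] (hσ : IsUniformOnSphere σ)
    (hbal : IsBalanced σ (polyhedron n 1)) {k l : ι}
    (hkl : ∀ i, i ≠ k → i ≠ l → ∃ j, n j = -n i) :
    polyhedron n 1 = -polyhedron n 1 := by
  set Ω := polyhedron n 1
  have hΩ : IsClosed Ω := isClosed_polyhedron n 1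
  have hneg {x : E} (hx : x ∈ Ω \ -Ω) : ⟪n k + n l, x⟫_ℝ < 0 :=
    inner_add_lt_zero_of_mem_polyhedron_sdiff_neg hkl hx
  have hempty : interior (Ω \ -Ω) = ∅ := by
    refine eq_empty_of_forall_notMem fun x hx => (hneg (interior_subset hx)).ne ?_
    rw [← neg_eq_zero, ← inner_neg_left]
    refine IsBalanced.inner_eq_zero_of_mem_interior_sdiff hσ hΩ.measurableSet
      hΩ.neg.measurableSet hbal (hbal.neg hσ) (fun y hy => ?_) (fun y hy => ?_) hx
    · simpa only [inner_neg_left, neg_nonneg] using (hneg hy).le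
    · have hy' : -y ∈ Ω \ -Ω := ⟨hy.1, by simpa using hy.2⟩
      simpa only [inner_neg_left, inner_neg_right, neg_neg] using (hneg hy').le
  have hsub : Ω ⊆ -Ω := subset_of_interior_sdiff_eq_empty (convex_polyhedron n 1)
    ⟨0, zero_mem_interior_polyhedron_one n⟩ hΩ.neg hempty
  exact hsub.antisymm (neg_subset.2 hsub)

lemma IsIrredundant.not_isBalanced_polyhedron_ne [Finite ι] (hσ : IsUniformOnSphere σ)
    (hn : IsIrredundant n 1) (hbal : IsBalanced σ (polyhedron n 1)) (k : ι) :
    ¬ IsBalanced σ (polyhedron (fun j : {j // j ≠ k} => n j) 1) := by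
  intro hbal'
  set Ω := polyhedron n 1
  set Ω' := polyhedron (fun j : {j // j ≠ k} => n j) 1
  have hΩ : IsClosed Ω := isClosed_polyhedron n 1
  have hsub : Ω ⊆ Ω' := fun x hx j => hx j
  have hlt {x : E} (hx : x ∈ Ω' \ Ω) : 1 < ⟪n k, x⟫_ℝ := by
    by_contra! hle
    exact hx.2 fun i => (eq_or_ne i k).elim (· ▸ hle) fun hi => hx.1 ⟨i, hi⟩
  obtain ⟨y, hyk, hyj⟩ := hn k
  have hint : y ∈ interior Ω' := mem_interior_polyhedron fun j => hyj j j.2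
  have hmem : ∀ᶠ s : ℝ in 𝓝[>] 1, s • y ∈ interior Ω' :=
    nhdsWithin_le_nhds <| ContinuousAt.eventually_mem (by fun_prop)
      (isOpen_interior.mem_nhds (by rwa [one_smul]))
  obtain ⟨s, hs, hs1 : 1 < s⟩ := (hmem.and self_mem_nhdsWithin).exists
  have hnotMem : s • y ∉ Ω := fun h => (h k).not_gt <| by
    rwa [real_inner_smul_right, hyk, Pi.one_apply, mul_one]
  have hsy : s • y ∈ interior (Ω' \ Ω) :=
    interior_maximal (sdiff_subset_sdiff_left interior_subset) (isOpen_interior.sdiff hΩ)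
      ⟨hs, hnotMem⟩
  have hzero : ⟪n k, s • y⟫_ℝ = 0 :=
    IsBalanced.inner_eq_zero_of_mem_interior_sdiff hσ (isClosed_polyhedron _ _).measurableSet
      hΩ.measurableSet hbal' hbal (fun x hx => (zero_lt_one.trans (hlt hx)).le)
      (fun x hx => absurd (hsub hx.1) hx.2) hsy
  linarith [hlt (interior_subset hsy)]

-- The hyperplane reflection exchanging two normals preserves the polyhedron, so the integral has
-- the same inner product with all of them.
lemma isBalanced_polyhedron_of_sum_eq_zero [Fintype ι] (hσ : IsUniformOnSphere σ)
    (hnorm : ∀ i j, ‖n i‖ = ‖n j‖) (hinner : ∀ i j k, k ≠ i → k ≠ j → ⟪n i - n j, n k⟫_ℝ = 0)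
    (hsum : ∑ i, n i = 0) : IsBalanced σ (polyhedron n 1) := by
  classical
  refine .of_forall fun r => ?_
  set I := ∫ v in (r • ·) ⁻¹' polyhedron n 1, v ∂σ
  have hfix (g : E ≃ₗᵢ[ℝ] E) (e : Equiv.Perm ι) (hg : ∀ i, g (n i) = n (e i)) : g I = I :=
    hσ.map_setIntegral_smul_preimage (preimage_polyhedron_of_perm g e hg fun _ => rfl) r
  have hspan : I ∈ Submodule.span ℝ (range n) := by
    refine (Submodule.reflection_eq_self_iff _).1 (hfix _ 1 fun i => ?_)
    exact Submodule.reflection_mem_subspace_eq_self (Submodule.subset_span ⟨i, rfl⟩)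
  have heq (i j : ι) : ⟪n i, I⟫_ℝ = ⟪n j, I⟫_ℝ := by
    have hswap := hfix _ _ (reflection_sub_eq_apply_swap (hnorm i j) (hinner i j))
    rwa [Submodule.reflection_eq_self_iff, Submodule.mem_orthogonal_singleton_iff_inner_right,
      inner_sub_left, sub_eq_zero] at hswap
  have horth (i : ι) : ⟪n i, I⟫_ℝ = 0 := by
    have : Nonempty ι := ⟨i⟩
    have hmul : (Fintype.card ι : ℝ) * ⟪n i, I⟫_ℝ = 0 := by
      rw [← nsmul_eq_mul, ← Finset.card_univ, ← Finset.sum_const,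
        Finset.sum_congr rfl fun j _ => heq i j, ← sum_inner, hsum, inner_zero_left]
    exact (mul_eq_zero.1 hmul).resolve_left (Nat.cast_ne_zero.2 Fintype.card_ne_zero)
  have hle : Submodule.span ℝ (range n) ≤ (ℝ ∙ I)ᗮ := Submodule.span_le.2 <| by
    rintro _ ⟨i, rfl⟩
    exact Submodule.mem_orthogonal_singleton_iff_inner_left.2 (horth i)
  exact inner_self_eq_zero.1 (Submodule.mem_orthogonal_singleton_iff_inner_right.1 (hle hspan))

lemma isBalanced_polyhedron_of_card_eq_three [Fintype ι] (hσ : IsUniformOnSphere σ)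
    (hι : Fintype.card ι = 3) (hnorm : ∀ i j, ‖n i‖ = ‖n j‖) (hsum : ∑ i, n i = 0) :
    IsBalanced σ (polyhedron n 1) := by
  classical
  refine isBalanced_polyhedron_of_sum_eq_zero hσ hnorm (fun i j k hki hkj => ?_) hsum
  rcases eq_or_ne i j with rfl | hij
  · rw [sub_self, inner_zero_left]
  have huniv : ({k, i, j} : Finset ι) = Finset.univ :=
    Finset.eq_univ_of_card _ (by rw [hι, Finset.card_eq_three.2 ⟨k, i, j, hki, hkj, hij, rfl⟩])
  have hk : n k = -(n i + n j) := by
    rw [← huniv, Finset.sum_insert (by simp [hki, hkj]), Finset.sum_pair hij] at hsum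
    exact eq_neg_of_add_eq_zero_left hsum
  rw [hk, inner_neg_right, real_inner_comm, real_inner_add_sub_eq_zero_iff _ _ |>.2 (hnorm i j),
    neg_zero]

lemma IsBalanced.exists_eq_neg_of_card_eq_four [Fintype ι] (hσ : IsUniformOnSphere σ)
    (hE : Module.finrank ℝ E ≤ 2) (hι : Fintype.card ι = 4) (hn : IsIrredundant n 1)
    (hbal : IsBalanced σ (polyhedron n 1)) : ∃ i j, i ≠ j ∧ n j = -n i := by
  classical
  have : Nonempty ι := Fintype.card_pos_iff.1 (by omega)
  obtain ⟨i₀, hmax⟩ := Finite.exists_max fun i => ‖n i‖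
  set M : Finset ι := {i | ‖n i‖ = ‖n i₀‖} with hM
  have hmem {i : ι} : i ∈ M ↔ ‖n i‖ = ‖n i₀‖ := by simp [hM]
  have hsum : ∑ i ∈ M, n i = 0 :=
    hbal.sum_normals_eq_zero hσ hn.injective (norm_pos_iff.2 (hn.ne_zero i₀)) hmax
  have hMpos : 0 < M.card := Finset.card_pos.2 ⟨i₀, hmem.2 rfl⟩
  have hMle : M.card ≤ 4 := hι ▸ M.card_le_univ
  obtain hcard | hcard | hcard | hcard : M.card = 1 ∨ M.card = 2 ∨ M.card = 3 ∨ M.card = 4 := by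
    omega
  · obtain ⟨i, hi⟩ := Finset.card_eq_one.1 hcard
    rw [hi, Finset.sum_singleton] at hsum
    exact absurd hsum (hn.ne_zero i)
  · obtain ⟨i, j, hij, hMij⟩ := Finset.card_eq_two.1 hcard
    rw [hMij, Finset.sum_pair hij] at hsum
    exact ⟨i, j, hij, eq_neg_of_add_eq_zero_right hsum⟩
  · obtain ⟨k, hk⟩ := Finset.card_eq_one.1 (show Mᶜ.card = 1 by rw [Finset.card_compl]; omega)
    have hMk (i : ι) : i ∈ M ↔ i ≠ k := by
      rw [← not_iff_not, ← Finset.mem_compl, hk, Finset.mem_singleton, not_not]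
    refine absurd (isBalanced_polyhedron_of_card_eq_three hσ ?_ ?_ ?_)
      (hn.not_isBalanced_polyhedron_ne hσ hbal k)
    · rw [Fintype.card_subtype_compl, Fintype.card_subtype_eq, hι]
    · exact fun i j => (hmem.1 ((hMk i).2 i.2)).trans (hmem.1 ((hMk j).2 j.2)).symm
    · rwa [← Finset.sum_subtype M hMk n]
  · have huniv : M = Finset.univ := M.card_eq_iff_eq_univ.1 (hcard.trans hι.symm)
    have hnorm (i : ι) : ‖n i‖ = ‖n i₀‖ := hmem.1 (huniv ▸ Finset.mem_univ i)
    exact exists_eq_neg_of_norm_eq_of_card_eq_four hE hι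
      (fun i j => (hnorm i).trans (hnorm j).symm) (huniv ▸ hsum)

lemma IsBalanced.polyhedron_eq_neg_of_card_eq_four [Fintype ι] (hσ : IsUniformOnSphere σ)
    (hE : Module.finrank ℝ E ≤ 2) (hι : Fintype.card ι = 4) (hn : IsIrredundant n 1)
    (hbal : IsBalanced σ (polyhedron n 1)) : polyhedron n 1 = -polyhedron n 1 := by
  classical
  obtain ⟨i, j, hij, hneg⟩ := hbal.exists_eq_neg_of_card_eq_four hσ hE hι hn
  obtain ⟨k, l, -, hkl⟩ := Finset.card_eq_two.1 <|
    show ({i, j} : Finset ι)ᶜ.card = 2 by rw [Finset.card_compl, Finset.card_pair hij, hι]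
  refine hbal.polyhedron_eq_neg hσ (k := k) (l := l) fun m hmk hml => ?_
  have hm : m ∉ ({i, j} : Finset ι)ᶜ := by simp [hkl, hmk, hml]
  rw [Finset.mem_compl, not_not, Finset.mem_insert, Finset.mem_singleton] at hm
  rcases hm with rfl | rfl
  exacts [⟨j, hneg⟩, ⟨i, by rw [hneg, neg_neg]⟩]

end BalancedSymmetry

section CrossPolytope

section Signs

variable {a : Fin 2 → ℝ}

lemma ne_zero_of_neg_of_pos (h0 : a 0 < 0) (h1 : 0 < a 1) (k : Fin 2) : a k ≠ 0 := by
  fin_cases k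
  exacts [h0.ne, h1.ne']

lemma div_neg_of_neg_of_pos_of_ne (h0 : a 0 < 0) (h1 : 0 < a 1) {k l : Fin 2} (hkl : k ≠ l) :
    a k / a l < 0 := by
  fin_cases k <;> fin_cases l <;> first
    | exact absurd rfl hkl
    | exact div_neg_of_neg_of_pos h0 h1
    | exact div_neg_of_pos_of_neg h1 h0

lemma div_le_one_of_neg_of_pos (h0 : a 0 < 0) (h1 : 0 < a 1) (k l : Fin 2) : a k / a l ≤ 1 := by
  rcases eq_or_ne k l with rfl | hkl
  · exact div_self_le_one _
  · exact (div_neg_of_neg_of_pos_of_ne h0 h1 hkl).le.trans zero_le_one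

lemma exists_div_nonneg_of_neg_of_pos (h0 : a 0 < 0) (h1 : 0 < a 1) (t : ℝ) : ∃ k, 0 ≤ t / a k := by
  rcases le_total 0 t with ht | ht
  exacts [⟨1, div_nonneg ht h1.le⟩, ⟨0, div_nonneg_of_nonpos ht h0.le⟩]

end Signs

section Convex

variable {E κ : Type*} [AddCommGroup E] [Module ℝ E] {d : κ → Fin 2 → ℝ}

lemma smul_add_sum_smul_mem_of_convex [Fintype κ] {s : Set E} (hs : Convex ℝ s) {p : E}
    (hp : p ∈ s) {v : κ → E} (hv : ∀ i, v i ∈ s) {w : κ → ℝ} (hw : ∀ i, 0 ≤ w i)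
    (hsum : ∑ i, w i ≤ 1) : (1 - ∑ i, w i) • p + ∑ i, w i • v i ∈ s := by
  have hmem : ∑ o : Option κ, o.elim (1 - ∑ i, w i) w • o.elim p v ∈ s := by
    refine hs.sum_mem ?_ ?_ ?_
    · rintro (_ | i) -
      exacts [sub_nonneg.2 hsum, hw i]
    · simp [Fintype.sum_option]
    · rintro (_ | i) -
      exacts [hp, hv i]
  simpa [Fintype.sum_option] using hmem

lemma center_mem_convexHull_crossPolytope [Nonempty κ] (h0 : ∀ i, d i 0 < 0) (h1 : ∀ i, 0 < d i 1)
    (P : E) (b : κ → E) :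
    P ∈ convexHull ℝ (range fun q : κ × Fin 2 => P + d q.1 q.2 • b q.1) := by
  obtain ⟨i⟩ := ‹Nonempty κ›
  have hpos : 0 < d i 1 - d i 0 := sub_pos.2 ((h0 i).trans (h1 i))
  refine segment_subset_convexHull (mem_range_self (i, 0)) (mem_range_self (i, 1))
    ⟨d i 1 / (d i 1 - d i 0), -d i 0 / (d i 1 - d i 0), div_nonneg (h1 i).le hpos.le,
      div_nonneg (neg_nonneg.2 (h0 i).le) hpos.le, ?_, ?_⟩
  · field_simp; ring
  · match_scalars <;> field_simp <;> ring

end Convex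

variable {E κ : Type*} [NormedAddCommGroup E] [InnerProductSpace ℝ E] [FiniteDimensional ℝ E]

/-- The vector representing the `i`-th coordinate functional of the basis `b`. -/
def dualVector (b : Module.Basis κ ℝ E) (i : κ) : E :=
  (toDual ℝ E).symm (LinearMap.toContinuousLinearMap (b.coord i))

@[simp]
lemma inner_dualVector (b : Module.Basis κ ℝ E) (i : κ) (x : E) :
    ⟪dualVector b i, x⟫_ℝ = b.repr x i := by
  simp [dualVector]

variable [Fintype κ] {b : Module.Basis κ ℝ E} {d : κ → Fin 2 → ℝ}

/-- Normals of the facets of the cross-polytope with vertices `P + d i k • b i`: the facet `φ`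
contains the vertices `P + d i (φ i) • b i`. -/
def facetNormal (b : Module.Basis κ ℝ E) (d : κ → Fin 2 → ℝ) (φ : κ → Fin 2) : E :=
  ∑ i, (d i (φ i))⁻¹ • dualVector b i

lemma inner_facetNormal (φ : κ → Fin 2) (x : E) :
    ⟪facetNormal b d φ, x⟫_ℝ = ∑ i, b.repr x i / d i (φ i) := by
  simp [facetNormal, sum_inner, real_inner_smul_left, div_eq_inv_mul]

lemma isIrredundant_facetNormal [Nonempty κ] (h0 : ∀ i, d i 0 < 0) (h1 : ∀ i, 0 < d i 1) (P : E) :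
    IsIrredundant (facetNormal b d) fun φ => 1 + ⟪facetNormal b d φ, P⟫_ℝ := by
  intro φ
  set m : ℝ := (Fintype.card κ : ℝ)
  have hm : 0 < m := Nat.cast_pos.2 Fintype.card_pos
  set y : E := ∑ i, (d i (φ i) / m) • b i
  have hy (ψ : κ → Fin 2) : ⟪facetNormal b d ψ, y⟫_ℝ = (∑ i, d i (φ i) / d i (ψ i)) / m := by
    rw [inner_facetNormal, b.repr_sum_self, Finset.sum_div]
    exact Finset.sum_congr rfl fun i _ => div_right_comm _ _ _
  have hone : ∑ _ : κ, (1 : ℝ) = m := by simp [m]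
  refine ⟨P + y, ?_, fun ψ hψ => ?_⟩
  · rw [inner_add_right, hy, add_comm, add_left_inj, div_eq_one_iff_eq hm.ne', ← hone]
    exact Finset.sum_congr rfl fun i _ => div_self (ne_zero_of_neg_of_pos (h0 i) (h1 i) _)
  · rw [inner_add_right, hy, add_comm, add_lt_add_iff_right, div_lt_one hm, ← hone]
    obtain ⟨i, hi⟩ := Function.ne_iff.1 hψ
    exact Finset.sum_lt_sum (fun j _ => div_le_one_of_neg_of_pos (h0 j) (h1 j) _ _)
      ⟨i, Finset.mem_univ i, (div_neg_of_neg_of_pos_of_ne (h0 i) (h1 i) hi.symm).trans zero_lt_one⟩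

lemma convexHull_eq_polyhedron_facetNormal [Nonempty κ] (h0 : ∀ i, d i 0 < 0)
    (h1 : ∀ i, 0 < d i 1) (P : E) :
    convexHull ℝ (range fun q : κ × Fin 2 => P + d q.1 q.2 • b q.1) =
      polyhedron (facetNormal b d) fun φ => 1 + ⟪facetNormal b d φ, P⟫_ℝ := by
  classical
  set v : κ × Fin 2 → E := fun q => P + d q.1 q.2 • b q.1
  refine (convexHull_min ?_ (convex_polyhedron _ _)).antisymm fun x hx => ?_
  · rintro _ ⟨⟨i, k⟩, rfl⟩ φ
    rw [inner_add_right, add_comm, add_le_add_iff_right, inner_facetNormal]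
    simpa [Finsupp.single_apply, ite_div] using div_le_one_of_neg_of_pos (h0 i) (h1 i) k (φ i)
  · choose φ hφ using fun i =>
      exists_div_nonneg_of_neg_of_pos (h0 i) (h1 i) (b.repr (x - P) i)
    set w : κ → ℝ := fun i => b.repr (x - P) i / d i (φ i)
    have hsum : ∑ i, w i ≤ 1 := by
      have hxφ := hx φ
      rwa [← sub_le_iff_le_add, ← inner_sub_right, inner_facetNormal] at hxφ
    have hrepr : ∑ i, w i • d i (φ i) • b i = x - P := by
      refine (Finset.sum_congr rfl fun i _ => ?_).trans (b.sum_repr (x - P))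
      rw [smul_smul, div_mul_cancel₀ _ (ne_zero_of_neg_of_pos (h0 i) (h1 i) _)]
    have hx_eq : x = (1 - ∑ i, w i) • P + ∑ i, w i • v (i, φ i) := by
      simp only [v, smul_add, Finset.sum_add_distrib, hrepr, ← Finset.sum_smul]
      module
    rw [hx_eq]
    exact smul_add_sum_smul_mem_of_convex (convex_convexHull ℝ _)
      (center_mem_convexHull_crossPolytope h0 h1 P b)
      (fun i => subset_convexHull ℝ _ (mem_range_self _)) hφ hsum

end CrossPolytope

section ConvexIndependent

variable {E : Type*} [AddCommGroup E] [Module ℝ E] {s T : Set E}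

lemma exists_convexHull_inter_convexHull_sdiff_nonempty [FiniteDimensional ℝ E] (hs : s.Finite)
    (hcard : Module.finrank ℝ E + 2 ≤ s.ncard) :
    ∃ T ⊆ s, (convexHull ℝ T ∩ convexHull ℝ (s \ T)).Nonempty := by
  have := hs.fintype
  have hdep : ¬ AffineIndependent ℝ ((↑) : s → E) := fun h => by
    have hle := h.card_le_finrank_succ.trans
      (Nat.add_le_add_right (Submodule.finrank_le (vectorSpan ℝ (range ((↑) : s → E)))) 1)
    rw [← Nat.card_eq_fintype_card, Nat.card_coe_set_eq] at hle
    omega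
  obtain ⟨I, hI⟩ := Convex.radon_partition hdep
  refine ⟨(↑) '' I, Subtype.coe_image_subset s I, ?_⟩
  rwa [image_compl_eq_range_sdiff_image Subtype.val_injective, Subtype.range_coe] at hI

lemma two_le_ncard_of_convexIndependent (hind : ConvexIndependent ℝ ((↑) : s → E)) (hT : T ⊆ s)
    (hfin : T.Finite) (h : (convexHull ℝ T ∩ convexHull ℝ (s \ T)).Nonempty) : 2 ≤ T.ncard := by
  obtain ⟨P, hPT, hP⟩ := h
  by_contra! hlt
  rcases (ncard_le_one_iff_eq hfin).1 (Nat.lt_succ_iff.1 hlt) with rfl | ⟨x, rfl⟩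
  · simp at hPT
  · rw [convexHull_singleton, mem_singleton_iff] at hPT
    exact convexIndependent_set_iff_notMem_convexHull_sdiff.1 hind x (hT rfl) (hPT ▸ hP)

lemma exists_segment_inter_segment_nonempty [FiniteDimensional ℝ E]
    (hE : Module.finrank ℝ E ≤ 2) (hs : s.ncard = 4) (hind : ConvexIndependent ℝ ((↑) : s → E)) :
    ∃ A B C D, A ≠ C ∧ B ≠ D ∧ Disjoint ({A, C} : Set E) {B, D} ∧ {A, C} ∪ {B, D} = s ∧
      (segment ℝ A C ∩ segment ℝ B D).Nonempty := by
  have hfin : s.Finite := finite_of_ncard_pos (by omega)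
  obtain ⟨T, hTs, hT⟩ := exists_convexHull_inter_convexHull_sdiff_nonempty hfin (by omega)
  have hadd : (s \ T).ncard + T.ncard = 4 := hs ▸ ncard_sdiff_add_ncard_of_subset hTs hfin
  have hT2 := two_le_ncard_of_convexIndependent hind hTs (hfin.subset hTs) hT
  have hT2' : 2 ≤ (s \ T).ncard := by
    refine two_le_ncard_of_convexIndependent hind sdiff_subset hfin.sdiff ?_
    rwa [sdiff_sdiff_cancel_left hTs, inter_comm]
  obtain ⟨A, C, hAC, hTAC⟩ := ncard_eq_two.1 (show T.ncard = 2 by omega)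
  obtain ⟨B, D, hBD, hTBD⟩ := ncard_eq_two.1 (show (s \ T).ncard = 2 by omega)
  refine ⟨A, B, C, D, hAC, hBD, ?_, ?_, ?_⟩
  · exact hTAC ▸ hTBD ▸ disjoint_sdiff_right
  · rw [← hTAC, ← hTBD, union_sdiff_cancel hTs]
  · rwa [hTBD, hTAC, convexHull_pair, convexHull_pair] at hT

lemma notMem_segment_of_convexIndependent (hind : ConvexIndependent ℝ ((↑) : s → E)) {x y z : E}
    (hx : x ∈ s) (hy : y ∈ s) (hz : z ∈ s) (hyx : y ≠ x) (hzx : z ≠ x) : x ∉ segment ℝ y z := by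
  rw [← convexHull_pair]
  exact fun h => convexIndependent_set_iff_notMem_convexHull_sdiff.1 hind x hx <|
    convexHull_mono (pair_subset (s := s \ {x}) ⟨hy, hyx⟩ ⟨hz, hzx⟩) h

lemma not_collinear_of_convexIndependent (hind : ConvexIndependent ℝ ((↑) : s → E)) {x y z : E}
    (hx : x ∈ s) (hy : y ∈ s) (hz : z ∈ s) (hxy : x ≠ y) (hyz : y ≠ z) (hzx : z ≠ x) :
    ¬ Collinear ℝ {x, y, z} := by
  intro hcol
  rcases hcol.wbtw_or_wbtw_or_wbtw with h | h | h <;> rw [← mem_segment_iff_wbtw] at h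
  · exact notMem_segment_of_convexIndependent hind hy hx hz hxy hyz.symm h
  · exact notMem_segment_of_convexIndependent hind hz hy hx hyz hzx.symm h
  · exact notMem_segment_of_convexIndependent hind hx hz hy hzx hxy.symm h

lemma collinear_of_smul_sub_eq {A B C D : E} {t u r : ℝ}
    (hP : A + t • (C - A) = B + u • (D - B)) (hr : r • (C - A) = D - B) :
    Collinear ℝ {A, B, C} := by
  refine (collinear_iff_of_mem (p₀ := A) (by simp)).2 ⟨C - A, ?_⟩
  have hB : B = (t - u * r) • (C - A) + A := by
    rw [sub_smul, mul_smul, hr, sub_add_eq_add_sub, add_comm, eq_sub_iff_add_eq, hP]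
  simp only [mem_insert_iff, mem_singleton_iff, forall_eq_or_imp, forall_eq, vadd_eq_add]
  exact ⟨⟨0, by simp⟩, ⟨_, hB⟩, ⟨1, by simp⟩⟩

lemma mem_openSegment_of_convexIndependent (hind : ConvexIndependent ℝ ((↑) : s → E))
    {A B C D P : E} (hA : A ∈ s) (hB : B ∈ s) (hC : C ∈ s) (hD : D ∈ s) (hBA : B ≠ A) (hDA : D ≠ A)
    (hBC : B ≠ C) (hDC : D ≠ C) (hAC : P ∈ segment ℝ A C) (hBD : P ∈ segment ℝ B D) :
    P ∈ openSegment ℝ A C := by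
  refine mem_openSegment_of_ne_left_right ?_ ?_ hAC <;> rintro rfl
  · exact notMem_segment_of_convexIndependent hind hA hB hD hBA hDA hBD
  · exact notMem_segment_of_convexIndependent hind hC hB hD hBC hDC hBD

lemma exists_basis_range_eq [FiniteDimensional ℝ E] (hE : Module.finrank ℝ E = 2)
    (hs : s.ncard = 4) (hind : ConvexIndependent ℝ ((↑) : s → E)) :
    ∃ (b : Module.Basis (Fin 2) ℝ E) (d : Fin 2 → Fin 2 → ℝ) (P : E), (∀ i, d i 0 < 0) ∧
      (∀ i, 0 < d i 1) ∧ range (fun q : Fin 2 × Fin 2 => P + d q.1 q.2 • b q.1) = s := by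
  obtain ⟨A, B, C, D, hAC, -, hdisj, rfl, P, hPAC, hPBD⟩ :=
    exists_segment_inter_segment_nonempty hE.le hs hind
  obtain ⟨⟨hBA, hBC⟩, hDA, hDC⟩ : (B ≠ A ∧ B ≠ C) ∧ D ≠ A ∧ D ≠ C := by
    simpa [not_or] using hdisj
  obtain ⟨t, ⟨ht0, ht1⟩, htP⟩ : P ∈ (fun θ : ℝ => A + θ • (C - A)) '' Ioo 0 1 := by
    rw [← openSegment_eq_image']
    exact mem_openSegment_of_convexIndependent hind (by simp) (by simp) (by simp) (by simp)
      hBA hDA hBC hDC hPAC hPBD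
  obtain ⟨u, ⟨hu0, hu1⟩, huP⟩ : P ∈ (fun θ : ℝ => B + θ • (D - B)) '' Ioo 0 1 := by
    rw [← openSegment_eq_image']
    exact mem_openSegment_of_convexIndependent hind (by simp) (by simp) (by simp) (by simp)
      hBA.symm hBC.symm hDA.symm hDC.symm hPBD hPAC
  have hli : LinearIndependent ℝ ![C - A, D - B] := by
    refine (LinearIndependent.pair_iff' (sub_ne_zero.2 hAC.symm)).2 fun r hr => ?_
    exact not_collinear_of_convexIndependent hind (by simp) (by simp) (by simp) hBA.symm hBC
      hAC.symm (collinear_of_smul_sub_eq (htP.trans huP.symm) hr)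
  refine ⟨basisOfLinearIndependentOfCardEqFinrank hli (by simp [hE]),
    ![![-t, 1 - t], ![-u, 1 - u]], P, ?_, ?_, ?_⟩
  · simp [Fin.forall_fin_two, ht0, hu0]
  · simp [Fin.forall_fin_two, ht1, hu1]
  · have hA : P + -t • (C - A) = A := by rw [← htP]; module
    have hC : P + (1 - t) • (C - A) = C := by rw [← htP]; module
    have hB : P + -u • (D - B) = B := by rw [← huP]; module
    have hD : P + (1 - u) • (D - B) = D := by rw [← huP]; module
    rw [union_comm]
    ext x
    simp [Fin.exists_fin_two, -neg_smul, hA, hB, hC, hD, eq_comm, or_assoc]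

end ConvexIndependent

section SurfaceMeasure

section NormedSpace

variable {E : Type*} [NormedAddCommGroup E] [NormedSpace ℝ E] [MeasurableSpace E] [BorelSpace E]

lemma hausdorffMeasure_inter_sphere_ne_zero (hE : 1 < Module.rank ℝ E) {U : Set E} (hU : IsOpen U)
    {v : E} (hvU : v ∈ U) (hv : ‖v‖ = 1) : μH[1] (U ∩ sphere 0 1) ≠ 0 := by
  obtain ⟨ε, hε, hball⟩ := Metric.isOpen_iff.1 hU v hvU
  have hIcc : Icc (0 : ℝ) 2 ⊆ (dist · v) '' sphere (0 : E) 1 := by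
    have hneg : dist (-v) v = 2 := by
      rw [dist_eq_norm, ← neg_add', norm_neg, ← two_smul ℝ v, norm_smul, hv]
      norm_num
    have := (isPreconnected_sphere hE (0 : E) 1).intermediate_value (f := (dist · v)) (a := v)
      (b := -v) (by simpa) (by simpa) (by fun_prop)
    rwa [dist_self, hneg] at this
  have himage : Ico 0 (min ε 2) ⊆ (dist · v) '' (U ∩ sphere 0 1) := by
    intro t ht
    obtain ⟨x, hx, rfl⟩ := hIcc ⟨ht.1, (ht.2.trans_le (min_le_right _ _)).le⟩
    exact ⟨x, ⟨hball (ht.2.trans_le (min_le_left _ _)), hx⟩, rfl⟩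
  have hlip : LipschitzWith 1 fun x : E => dist x v := LipschitzWith.dist_left v
  have hle := (measure_mono himage).trans (hlip.hausdorffMeasure_image_le zero_le_one _)
  rw [hausdorffMeasure_real, Real.volume_Ico] at hle
  intro hzero
  simp [hzero, hε.not_ge] at hle

end NormedSpace

variable {E : Type*} [NormedAddCommGroup E] [InnerProductSpace ℝ E] [MeasurableSpace E]
  [BorelSpace E]

lemma hausdorffMeasure_sphere_lt_top (hE : Module.finrank ℝ E = 2) :
    μH[1] (sphere (0 : E) 1) < ⊤ := by
  have : FiniteDimensional ℝ E := Module.finite_of_finrank_eq_succ hE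
  set Φ : ℂ ≃ₗᵢ[ℝ] E :=
    Complex.orthonormalBasisOneI.equiv (stdOrthonormalBasis ℝ E) (finCongr hE.symm)
  have himage : Φ '' (circleMap 0 1 '' Ioc 0 (2 * Real.pi)) = sphere 0 1 := by
    rw [image_circleMap_Ioc, abs_one, Φ.image_sphere, map_zero]
  rw [← himage, Φ.isometry.hausdorffMeasure_image (.inl zero_le_one)]
  refine ((lipschitzWith_circleMap 0 1).hausdorffMeasure_image_le zero_le_one _).trans_lt ?_
  simp [hausdorffMeasure_real, ENNReal.mul_lt_top]

lemma isUniformOnSphere_hausdorffMeasure (hE : Module.finrank ℝ E = 2) :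
    IsUniformOnSphere (μH[1].restrict (sphere (0 : E) 1)) where
  isFiniteMeasure := isFiniteMeasure_restrict.2 (hausdorffMeasure_sphere_lt_top hE).ne
  ae_norm_eq_one := (ae_restrict_mem isClosed_sphere.measurableSet).mono fun v hv => by
    simpa using hv
  measurePreserving g := by
    have := (g.toIsometryEquiv.measurePreserving_hausdorffMeasure 1).restrict_preimage
      (isClosed_sphere (x := (0 : E)) (ε := 1)).measurableSet
    simpa using this
  measure_ne_zero hU v hvU hv := by
    have hrank : 1 < Module.rank ℝ E := by
      exact_mod_cast Module.lt_rank_of_lt_finrank (hE ▸ one_lt_two)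
    rw [Measure.restrict_apply hU.measurableSet]
    exact hausdorffMeasure_inter_sphere_ne_zero hrank hU hvU hv

lemma SatisfiesBalanceLaw.isBalanced {m : ℕ} {d : ℝ} (hd : (m : ℝ) - 1 = d)
    {Ω : Set (EuclideanSpace ℝ (Fin m))} (hΩm : MeasurableSet Ω) (hΩ : SatisfiesBalanceLaw Ω) :
    IsBalanced (μH[d].restrict (sphere 0 1)) Ω := by
  subst hd
  filter_upwards [hΩ] with r hr
  rw [← integral_indicator (measurable_const_smul r hΩm)]
  refine (integral_congr_ae (.of_forall fun v => ?_)).trans hr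
  by_cases hv : r • v ∈ Ω <;> simp [hv]

end SurfaceMeasure

section NotMem

variable {E : Type*} [AddCommGroup E] [Module ℝ E] {A B C D : E}

lemma ncard_eq_four_of_notMem_convexHull (hA : A ∉ convexHull ℝ {B, C, D})
    (hB : B ∉ convexHull ℝ {A, C, D}) (hC : C ∉ convexHull ℝ {A, B, D}) :
    ({A, B, C, D} : Set E).ncard = 4 := by
  have hnotMem {x : E} {s : Set E} (hx : x ∉ convexHull ℝ s) : x ∉ s :=
    fun h => hx (subset_convexHull ℝ s h)
  have hCD : C ≠ D := by
    rintro rfl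
    exact hnotMem hC (by simp)
  rw [ncard_insert_of_notMem (hnotMem hA),
    ncard_insert_of_notMem fun h => hnotMem hB (mem_insert_of_mem A h), ncard_pair hCD]

lemma convexIndependent_of_notMem_convexHull (hA : A ∉ convexHull ℝ {B, C, D})
    (hB : B ∉ convexHull ℝ {A, C, D}) (hC : C ∉ convexHull ℝ {A, B, D})
    (hD : D ∉ convexHull ℝ {A, B, C}) :
    ConvexIndependent ℝ ((↑) : ({A, B, C, D} : Set E) → E) := by
  rw [convexIndependent_set_iff_notMem_convexHull_sdiff]
  rintro x (rfl | rfl | rfl | rfl) hx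
  · exact hA (convexHull_mono (by grind) hx)
  · exact hB (convexHull_mono (by grind) hx)
  · exact hC (convexHull_mono (by grind) hx)
  · exact hD (convexHull_mono (by grind) hx)

end NotMem

theorem stmt7_general {E : Type*} [NormedAddCommGroup E] [InnerProductSpace ℝ E]
    [MeasurableSpace E] [BorelSpace E] (hE : Module.finrank ℝ E = 2) {σ : Measure E}
    (hσ : IsUniformOnSphere σ) {s : Set E} (hs : s.ncard = 4)
    (hind : ConvexIndependent ℝ ((↑) : s → E)) (hbal : IsBalanced σ (convexHull ℝ s)) :
    convexHull ℝ s = -convexHull ℝ s := by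
  have : FiniteDimensional ℝ E := Module.finite_of_finrank_eq_succ hE
  obtain ⟨b, d, P, h0, h1, rfl⟩ := exists_basis_range_eq hE hs hind
  rw [convexHull_eq_polyhedron_facetNormal h0 h1] at hbal ⊢
  have hirr := isIrredundant_facetNormal (b := b) h0 h1 P
  set n := facetNormal b d
  set c : (Fin 2 → Fin 2) → ℝ := fun φ => 1 + ⟪n φ, P⟫_ℝ
  obtain ⟨x, hx⟩ := hirr.exists_forall_lt
  have hc (φ : Fin 2 → Fin 2) : 0 < c φ :=
    hbal.pos_of_subset_halfSpace hσ (isClosed_polyhedron n c).measurableSet (fun y hy => hy φ)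
      (mem_interior_polyhedron hx) (hx φ)
  rw [← polyhedron_inv_smul n hc] at hbal ⊢
  exact hbal.polyhedron_eq_neg_of_card_eq_four hσ hE.le (by simp) (hirr.inv_smul hc)

theorem stmt7 (A B C D : EuclideanSpace ℝ (Fin 2))
    (hA : A ∉ convexHull ℝ ({B, C, D} : Set (EuclideanSpace ℝ (Fin 2))))
    (hB : B ∉ convexHull ℝ ({A, C, D} : Set (EuclideanSpace ℝ (Fin 2))))
    (hC : C ∉ convexHull ℝ ({A, B, D} : Set (EuclideanSpace ℝ (Fin 2))))
    (hD : D ∉ convexHull ℝ ({A, B, C} : Set (EuclideanSpace ℝ (Fin 2))))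
    (hbal : SatisfiesBalanceLaw (convexHull ℝ {A, B, C, D})) :
    convexHull ℝ ({A, B, C, D} : Set (EuclideanSpace ℝ (Fin 2))) =
      -(convexHull ℝ ({A, B, C, D} : Set (EuclideanSpace ℝ (Fin 2)))) := by
  have hE : Module.finrank ℝ (EuclideanSpace ℝ (Fin 2)) = 2 := finrank_euclideanSpace_fin
  have hΩ := ((toFinite {A, B, C, D}).isClosed_convexHull ℝ).measurableSet
  exact stmt7_general hE (isUniformOnSphere_hausdorffMeasure hE)
    (ncard_eq_four_of_notMem_convexHull hA hB hC)
    (convexIndependent_of_notMem_convexHull hA hB hC hD) (hbal.isBalanced (by norm_num) hΩ)
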